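/- Let v⁺, v⁻ : ℝ² → ℝ be three times continuously differentiable (ContDiff ℝ 3), fix (x,y) ∈ ℝ², and for each h > 0 let η_h ∈ [y, y+h] (the vertical intersection ordinate of the interface with the grid line). Define the jumps at (x, η_h) by [v] = v⁺(x,η_h) − v⁻(x,η_h), [v_y] = ∂_y v⁺(x,η_h) − ∂_y v⁻(x,η_h), [v_yy] = ∂_yy v⁺(x,η_h) − ∂_yy v⁻(x,η_h). Define the vertical truncation error at the exterior node, E_h = (v⁻(x,y+h) + v⁺(x,y−h) − 2·v⁺(x,y))/h² − ∂_yy v⁺(x,y), and the correction C_h⁺ = −(1/h²)·([v] + [v_y]·(y+h−η_h) + (1/2)·[v_yy]·(y+h−η_h)²). Then there exist constants C > 0 and δ > 0 such that for all 0 < h < δ and any choice of η_h ∈ [y, y+h], |E_h − C_h⁺| ≤ C·h. -/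

import Mathlib

/-!
Write `R_f(a, b)` for the remainder at `b` of the second-order Taylor expansion of `f` about `a`.
The correction is, up to the factor `-1 / h²`, the difference of the Taylor expansions of `v⁺` and
`v⁻` about the intersection point, evaluated at `y + h`. Subtracting it therefore replaces
`v⁻(y + h)` by `v⁺(y + h)` up to two remainders, and what is left is the truncation error of the
ordinary central difference of `v⁺`, again a sum of two remainders:
`h² (E_h - C_h⁺) = R_{v⁻}(η, y + h) - R_{v⁺}(η, y + h) + R_{v⁺}(y, y + h) + R_{v⁺}(y, y - h)`.
Each remainder is `O(h³)`, uniformly in `η`, because the third derivatives are locally bounded.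
-/

open Set Metric
open scoped Nat

section Taylor

variable {E : Type*} [NormedAddCommGroup E] [NormedSpace ℝ E] {f : ℝ → E} {n : ℕ} {a b y : ℝ}

theorem norm_sub_taylorWithinEval_le_of_convex {s : Set ℝ} {K : ℝ} (hs : Convex ℝ s)
    (hsu : UniqueDiffOn ℝ s) (hf : ContDiffOn ℝ (n + 1) f s)
    (hK : ∀ t ∈ s, ‖iteratedDerivWithin (n + 1) f s t‖ ≤ K) (ha : a ∈ s) (hb : b ∈ s) :
    ‖f b - taylorWithinEval f n s a b‖ ≤ K / n ! * |b - a| ^ (n + 1) := by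
  have hsub : uIcc a b ⊆ s := hs.ordConnected.uIcc_subset ha hb
  -- Moving the base point from `a` to `b` turns the Taylor polynomial at `b` into `f b`.
  have hderiv : ∀ t ∈ uIcc a b, HasDerivWithinAt (fun c ↦ taylorWithinEval f n s c b)
      (((n ! : ℝ)⁻¹ * (b - t) ^ n) • iteratedDerivWithin (n + 1) f s t) (uIcc a b) t := by
    intro t ht
    have hdiff := hf.differentiableOn_iteratedDerivWithin (m := n) (by norm_cast; lia) hsu
    exact (hasDerivWithinAt_taylorWithinEval hsu self_mem_nhdsWithin (hsub ht) Subset.rfl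
      (hf.of_le (by norm_cast; lia)) (hdiff t (hsub ht))).mono hsub
  have hbound : ∀ t ∈ uIcc a b,
      ‖((n ! : ℝ)⁻¹ * (b - t) ^ n) • iteratedDerivWithin (n + 1) f s t‖
        ≤ (n ! : ℝ)⁻¹ * |b - a| ^ n * K := by
    intro t ht
    rw [norm_smul, norm_mul, norm_inv, norm_pow, Real.norm_natCast, Real.norm_eq_abs]
    have hbt : |b - t| ≤ |b - a| := abs_sub_right_of_mem_uIcc ht
    have hKt := hK t (hsub ht)
    gcongr
  calc ‖f b - taylorWithinEval f n s a b‖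
      = ‖taylorWithinEval f n s b b - taylorWithinEval f n s a b‖ := by rw [taylorWithinEval_self]
    _ ≤ (n ! : ℝ)⁻¹ * |b - a| ^ n * K * ‖b - a‖ :=
        (convex_uIcc a b).norm_image_sub_le_of_norm_hasDerivWithin_le hderiv hbound
          left_mem_uIcc right_mem_uIcc
    _ = K / n ! * |b - a| ^ (n + 1) := by rw [Real.norm_eq_abs]; ring

/-- The error at `b` of the `n`-th Taylor polynomial of `f` about `a`. -/
noncomputable def taylorRemainder (f : ℝ → E) (n : ℕ) (a b : ℝ) : E :=
  f b - taylorWithinEval f n univ a b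

theorem taylorRemainder_two (f : ℝ → E) (a b : ℝ) :
    taylorRemainder f 2 a b =
      f b - (f a + (b - a) • deriv f a + ((b - a) ^ 2 / 2) • iteratedDeriv 2 f a) := by
  simp [taylorRemainder, iteratedDerivWithin_univ, iteratedDeriv_one, div_eq_inv_mul,
    one_add_one_eq_two]

theorem taylorWithinEval_of_isOpen {s : Set ℝ} (hs : IsOpen s) (ha : a ∈ s) :
    taylorWithinEval f n s a b = taylorWithinEval f n univ a b := by
  simp only [taylor_within_apply, iteratedDerivWithin_univ, iteratedDerivWithin_of_isOpen hs ha]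

theorem exists_norm_taylorRemainder_le (hf : ContDiffAt ℝ (n + 1) f y) :
    ∃ M > 0, ∃ δ > 0, ∀ a ∈ ball y δ, ∀ b ∈ ball y δ,
      ‖taylorRemainder f n a b‖ ≤ M * |b - a| ^ (n + 1) := by
  have hcont : ContinuousAt (fun t ↦ ‖iteratedDeriv (n + 1) f t‖) y := by
    simpa only [norm_iteratedFDeriv_eq_norm_iteratedDeriv] using
      (hf.continuousAt_iteratedFDeriv (k := n + 1) (by norm_cast)).norm
  obtain ⟨K, hK⟩ := exists_gt ‖iteratedDeriv (n + 1) f y‖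
  have hKpos : 0 < K := (norm_nonneg _).trans_lt hK
  obtain ⟨δ, hδ, hball⟩ := eventually_nhds_iff_ball.1
    ((hf.eventually (by exact_mod_cast ENat.natCast_ne_top (n + 1))).and
      (hcont.eventually_le_const hK))
  refine ⟨K / n !, by positivity, δ, hδ, fun a ha b hb ↦ ?_⟩
  rw [taylorRemainder, ← taylorWithinEval_of_isOpen isOpen_ball ha]
  refine norm_sub_taylorWithinEval_le_of_convex (convex_ball y δ) isOpen_ball.uniqueDiffOn
    (fun t ht ↦ (hball t ht).1.contDiffWithinAt) (fun t ht ↦ ?_) ha hb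
  rw [iteratedDerivWithin_of_isOpen isOpen_ball ht]
  exact (hball t ht).2

theorem exists_norm_taylorRemainder_le_of_mem_uIcc (hf : ContDiffAt ℝ (n + 1) f y) :
    ∃ M > 0, ∃ δ > 0, ∀ h : ℝ, |h| < δ → ∀ a ∈ uIcc y (y + h),
      ‖taylorRemainder f n a (y + h)‖ ≤ M * |h| ^ (n + 1) := by
  obtain ⟨M, hM, δ, hδ, hbound⟩ := exists_norm_taylorRemainder_le hf
  refine ⟨M, hM, δ, hδ, fun h hh a ha ↦ ?_⟩
  have hyh : y + h ∈ ball y δ := by simpa using hh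
  have ha_ball : a ∈ ball y δ :=
    (convex_ball y δ).ordConnected.uIcc_subset (mem_ball_self hδ) hyh ha
  have ha_dist : |y + h - a| ≤ |h| := by simpa using abs_sub_right_of_mem_uIcc ha
  exact (hbound a ha_ball _ hyh).trans (by gcongr)

end Taylor

section VerticalCorrection

variable {E : Type*} [NormedAddCommGroup E] [NormedSpace ℝ E] {f g : ℝ → E} {y h η : ℝ}

/-- The truncation error `E_h` at the node `y` of the central second difference in which the
neighbour `y + h` lies across the interface. Here `f` and `g` are the restrictions of `v⁺` and `v⁻`
to the vertical grid line. -/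
noncomputable def verticalTruncationError (f g : ℝ → E) (y h : ℝ) : E :=
  (1 / h ^ 2) • (g (y + h) + f (y - h) - (2 : ℝ) • f y) - iteratedDeriv 2 f y

/-- The correction `C_h⁺` built from the jumps, at the interface ordinate `η`, of the function and
of its first two vertical derivatives, with `f` and `g` the restrictions of `v⁺` and `v⁻` to the
vertical grid line. -/
noncomputable def verticalCorrection (f g : ℝ → E) (y h η : ℝ) : E :=
  -(1 / h ^ 2) • ((f η - g η) + (y + h - η) • (deriv f η - deriv g η)
    + ((1 / 2) * (y + h - η) ^ 2) • (iteratedDeriv 2 f η - iteratedDeriv 2 g η))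

theorem verticalTruncationError_sub_verticalCorrection (hh : h ≠ 0) :
    verticalTruncationError f g y h - verticalCorrection f g y h η =
      (1 / h ^ 2) • (taylorRemainder g 2 η (y + h) - taylorRemainder f 2 η (y + h)
        + taylorRemainder f 2 y (y + h) + taylorRemainder f 2 y (y - h)) := by
  simp only [verticalTruncationError, verticalCorrection, taylorRemainder_two]
  match_scalars <;> field_simp <;> ring

theorem kfbi_vertical_correction_exterior_first_order_general
    (hf : ContDiffAt ℝ 3 f y) (hg : ContDiffAt ℝ 3 g y) :
    ∃ C > 0, ∃ δ > 0, ∀ h : ℝ, h ≠ 0 → |h| < δ → ∀ η ∈ uIcc y (y + h),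
      ‖verticalTruncationError f g y h - verticalCorrection f g y h η‖ ≤ C * |h| := by
  obtain ⟨M, hM, δf, hδf, hRf⟩ :=
    exists_norm_taylorRemainder_le_of_mem_uIcc (n := 2) (by exact_mod_cast hf)
  obtain ⟨N, hN, δg, hδg, hRg⟩ :=
    exists_norm_taylorRemainder_le_of_mem_uIcc (n := 2) (by exact_mod_cast hg)
  refine ⟨N + 3 * M, by positivity, min δf δg, by positivity, fun h hh hδ η hη ↦ ?_⟩
  obtain ⟨hhf, hhg⟩ := lt_min_iff.1 hδ
  have hgη : ‖taylorRemainder g 2 η (y + h)‖ ≤ N * |h| ^ 3 := hRg h hhg η hη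
  have hfη : ‖taylorRemainder f 2 η (y + h)‖ ≤ M * |h| ^ 3 := hRf h hhf η hη
  have hfadd : ‖taylorRemainder f 2 y (y + h)‖ ≤ M * |h| ^ 3 := hRf h hhf y left_mem_uIcc
  have hfsub : ‖taylorRemainder f 2 y (y - h)‖ ≤ M * |h| ^ 3 := by
    simpa [← sub_eq_add_neg] using hRf (-h) (by rwa [abs_neg]) y left_mem_uIcc
  rw [verticalTruncationError_sub_verticalCorrection hh, norm_smul]
  calc
    _ ≤ ‖1 / h ^ 2‖ * (N * |h| ^ 3 + M * |h| ^ 3 + M * |h| ^ 3 + M * |h| ^ 3) := by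
      gcongr
      exact norm_add_le_of_le (norm_add_le_of_le (norm_sub_le_of_le hgη hfη) hfadd) hfsub
    _ = (N + 3 * M) * |h| := by
      have : |h| ≠ 0 := abs_ne_zero.2 hh
      rw [norm_div, norm_pow, norm_one, Real.norm_eq_abs]
      field_simp
      ring

end VerticalCorrection

/-- First-order accuracy of the KFBI vertical correction at an exterior
irregular node: the corrected truncation error is `O(h)`. -/
theorem kfbi_vertical_correction_exterior_first_order
    (vp vm : ℝ × ℝ → ℝ) (hvp : ContDiff ℝ 3 vp) (hvm : ContDiff ℝ 3 vm)
    (x y : ℝ) :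
    ∃ C > 0, ∃ δ > 0, ∀ h : ℝ, 0 < h → h < δ →
      ∀ η : ℝ, η ∈ Set.Icc y (y + h) →
      |((vm (x, y + h) + vp (x, y - h) - 2 * vp (x, y)) / h ^ 2
            - iteratedDeriv 2 (fun t => vp (x, t)) y)
        - (-(1 / h ^ 2) *
            ((vp (x, η) - vm (x, η))
              + (deriv (fun t => vp (x, t)) η - deriv (fun t => vm (x, t)) η) * (y + h - η)
              + (1 / 2) *
                  (iteratedDeriv 2 (fun t => vp (x, t)) η
                    - iteratedDeriv 2 (fun t => vm (x, t)) η) * (y + h - η) ^ 2))|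
        ≤ C * h := by
  obtain ⟨C, hC, δ, hδ, hbound⟩ := kfbi_vertical_correction_exterior_first_order_general
    (f := fun t ↦ vp (x, t)) (g := fun t ↦ vm (x, t)) (y := y)
    (hvp.comp (by fun_prop)).contDiffAt (hvm.comp (by fun_prop)).contDiffAt
  refine ⟨C, hC, δ, hδ, fun h hpos hlt η hη ↦ ?_⟩
  convert hbound h hpos.ne' (by rwa [abs_of_pos hpos]) η (Icc_subset_uIcc hη) using 1
  · simp only [verticalTruncationError, verticalCorrection, smul_eq_mul, Real.norm_eq_abs]
    ring_nf
  · rw [abs_of_pos hpos]
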